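/- Let m and p be positive integers and set l = 4mp+1, t = 4mp−2p+1, p' = 2mp. Then for every integer k with 1 ≤ k ≤ p' one has σ_{i_k} + σ_{i_{p'+1−k}} = 0. -/

import Mathlib

open Finset

noncomputable section

/-- The q-Pochhammer symbol `(a; q)_n = ∏_{k=0}^{n-1} (1 - a q^k)`. -/
def qPoch (a q : ℂ) (n : ℕ) : ℂ := ∏ k ∈ Finset.range n, (1 - a * q ^ k)

/-- The Gaussian binomial coefficient `[n; k]_q` as a polynomial in `q` over `ℤ`,
defined by the q-Pascal rule `[n; k] = [n-1; k-1] + q^k [n-1; k]`.  It is the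
polynomial equal to `(q;q)_n / ((q;q)_{n-k} (q;q)_k)`. -/
def gaussPoly : ℕ → ℕ → Polynomial ℤ
  | _, 0 => 1
  | 0, _ + 1 => 0
  | n + 1, k + 1 => gaussPoly n k + Polynomial.X ^ (k + 1) * gaussPoly n (k + 1)

/-- The Gaussian binomial coefficient `[n; k]_q` evaluated at `q : ℂ`. -/
def gbin (q : ℂ) (n k : ℕ) : ℂ := Polynomial.aeval q (gaussPoly n k)

/-- `σ_j = (-1)^⌊(2j-1)t/l⌋`. -/
def sigmaT (l t j : ℕ) : ℤ := (-1) ^ ((2 * j - 1) * t / l)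

/-- `r(j)`: the unique integer with `r(j) ≡ (2j-1)t (mod 2l)` and `-l < r(j) < l`. -/
def rT (l t j : ℕ) : ℤ :=
  if (((2 * j - 1) * t % (2 * l) : ℕ) : ℤ) < (l : ℤ) then (((2 * j - 1) * t % (2 * l) : ℕ) : ℤ)
  else (((2 * j - 1) * t % (2 * l) : ℕ) : ℤ) - 2 * (l : ℤ)

/-- `r'(j) = (|r(j)| + 1)/2`. -/
def rpT (l t j : ℕ) : ℕ := ((rT l t j).natAbs + 1) / 2

open Classical in
/-- `i_k`: the unique `j ∈ {1, …, (l-1)/2}` with `r'(j) = k`. -/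
def iT (l t k : ℕ) : ℕ :=
  if h : ∃ j, j ∈ Finset.Icc 1 ((l - 1) / 2) ∧ rpT l t j = k then h.choose else 0

/-- `ε_{i,j,m}`: `1` if `j ≡ -i, -i-1 (mod 2m)`, `-1` if `j ≡ i, i-1 (mod 2m)`,
`0` otherwise (and `0` when `m ∣ i`, a case excluded in all uses). -/
def epsLO (m i j : ℕ) : ℤ :=
  if m ∣ i then 0
  else if 2 * m ∣ (i + j) ∨ 2 * m ∣ (i + j + 1) then 1
  else if (2 * (m : ℤ)) ∣ ((j : ℤ) - (i : ℤ)) ∨ (2 * (m : ℤ)) ∣ ((j : ℤ) - (i : ℤ) + 1) then -1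
  else 0

/-- `Δ_{i,j,m}`: `1` if `j ≡ -i, -i+1 (mod 2m)`, `-1` if `j ≡ i, i+1 (mod 2m)`,
`0` otherwise (and `0` when `m ∣ i`, a case excluded in all uses). -/
def deltaLO (m i j : ℕ) : ℤ :=
  if m ∣ i then 0
  else if 2 * m ∣ (i + j) ∨ 2 * m ∣ (i + j - 1) then 1
  else if (2 * (m : ℤ)) ∣ ((j : ℤ) - (i : ℤ)) ∨ (2 * (m : ℤ)) ∣ ((j : ℤ) - (i : ℤ) - 1) then -1
  else 0

/-- `γ_{i,m} = 1` if `i ≡ 1, …, m-1 (mod 2m)` and `-1` otherwise. -/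
def gamLO (m i : ℕ) : ℤ :=
  if 1 ≤ i % (2 * m) ∧ i % (2 * m) ≤ m - 1 then 1 else -1

/-- `β_{i,m} = 1` if `i ≡ 1, …, m-1 (mod 2m)`, `-1` if `i ≡ m+1, …, 2m-1 (mod 2m)`,
and `0` if `m ∣ i`. -/
def betLO (m i : ℕ) : ℤ :=
  if 1 ≤ i % (2 * m) ∧ i % (2 * m) ≤ m - 1 then 1
  else if m + 1 ≤ i % (2 * m) ∧ i % (2 * m) ≤ 2 * m - 1 then -1
  else 0

/-- Extend a tuple `f : Fin P → Fin N` to `n : ℕ → ℕ` with `n i = f (i-1)` for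
`1 ≤ i ≤ P` and `n i = 0` otherwise (in particular `n 0 = 0`). -/
def extTup (P N : ℕ) (f : Fin P → Fin N) : ℕ → ℕ :=
  fun i => if h : 1 ≤ i ∧ i ≤ P then (f ⟨i - 1, by omega⟩ : ℕ) else 0

/-- Takata's exponent `a(n)` (an integer; every integer division below is exact). -/
def aT (l t : ℕ) (n : ℕ → ℕ) : ℤ :=
  -(∑ j ∈ Icc 1 ((l - 1) / 2), (∑ k ∈ Icc (rpT l t j) ((l - 1) / 2),
      (sigmaT l t (iT l t k) + sigmaT l t (iT l t ((l - 1) / 2 + 1 - k))) / 2) *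
      ((n j : ℤ) - (n (j - 1) : ℤ)))
  - ∑ j ∈ Icc 1 ((l - 1) / 2 - 1), ((sigmaT l t (j + 1) + sigmaT l t ((l - 1) / 2 + 1 - j)) / 2) * (n j : ℤ)
  - ((sigmaT l t ((l - 1) / 2) + 1) / 2) * (n ((l - 1) / 2) : ℤ)
  - ∑ j ∈ Icc 1 ((l - 1) / 2), sigmaT l t j

/-- Takata's exponent `b₁(n)` (an integer; every integer division below is exact
whenever the factor it multiplies is nonzero). -/
def b1T (l t : ℕ) (n : ℕ → ℕ) : ℤ :=
  -aT l t n
  + ∑ k ∈ Icc 1 ((l - t) / 2), ((1 - sigmaT l t (iT l t k)) / 2) * (n (iT l t k - 1) : ℤ)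
  - ∑ k ∈ Icc ((l - t) / 2 + 1) ((l - 1) / 2), (n (iT l t k - 1) : ℤ)
  + ∑ k ∈ Icc ((l - t) / 2 + 1) ((l - 1) / 2), ((1 + sigmaT l t (iT l t k)) / 2) * (n (iT l t k) : ℤ)
  - (1 + sigmaT l t ((l - 1) / 2)) * (n ((l - 1) / 2) : ℤ)
  + ∑ j ∈ Icc 1 ((l - 1) / 2 - 1), ((sigmaT l t (j + 1) - sigmaT l t j) / 2) * (n j : ℤ)
  - ∑ k ∈ Icc 1 ((l - 1) / 2 - 1), ∑ k' ∈ Icc (k + 1) ((l - 1) / 2),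
      ((1 + Int.sign ((iT l t k : ℤ) - (iT l t k' : ℤ))) / 2) *
        ((sigmaT l t (iT l t k) - sigmaT l t (iT l t k')) / 2) *
        ((n (iT l t k) : ℤ) - (n (iT l t k - 1) : ℤ)) *
        ((n (iT l t k') : ℤ) - (n (iT l t k' - 1) : ℤ))
  + ∑ j ∈ Icc 1 ((l - 1) / 2), sigmaT l t j *
      (∑ k ∈ Icc 1 (rpT l t j), ((n (iT l t k) : ℤ) - (n (iT l t k - 1) : ℤ))) * (n (j - 1) : ℤ)

/-- Takata's exponent `b₂(n)`. -/
def b2T (l t : ℕ) (n : ℕ → ℕ) : ℤ :=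
  if l < 2 * t then
    ∑ k ∈ Icc ((l - t) / 2 + 1) ((t - 1) / 2),
      ((1 + sigmaT l t (iT l t k)) / 2) * (n (iT l t k - 1) : ℤ)
  else
    -∑ k ∈ Icc ((t + 1) / 2 + 1) ((l - t) / 2),
      ((1 + sigmaT l t (iT l t k)) / 2) * (n (iT l t k - 1) : ℤ)

/-- Takata's `κ(p')`. -/
def kapT (l t N : ℕ) (n : ℕ → ℕ) : ℤ :=
  if sigmaT l t ((l - 1) / 2) = -1 then -(N : ℤ) * (n ((l - 1) / 2) : ℤ) else 0

/-- Takata's `τ(j)`. -/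
def tauT (l t : ℕ) (q : ℂ) (n : ℕ → ℕ) (j : ℕ) : ℂ :=
  if sigmaT l t j = -1 then (-1 : ℂ) ^ (n j - n (j - 1))
  else q ^ ((((n j : ℤ) - (n (j - 1) : ℤ)) * (((n j : ℤ) - (n (j - 1) : ℤ)) + 1)) / 2)

/-- Takata's `X(n)`. -/
def XT (l t N : ℕ) (q : ℂ) (n : ℕ → ℕ) : ℂ :=
  (-1 : ℂ) ^ (n ((l - 1) / 2)) * q ^ kapT l t N n *
    (qPoch q q (N - 1) * qPoch q q (n ((l - 1) / 2)) / qPoch q q (N - n ((l - 1) / 2) - 1)) *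
    ∏ j ∈ Icc 1 ((l - 1) / 2), tauT l t q n j / qPoch q q (n j - n (j - 1))

/-- `r(j)` is the balanced residue of `(2j-1)t` modulo `2l`, and `σ_j` is its sign. -/
lemma rT_sigmaT_spec {l t j : ℕ} (hl : 0 < l) (hj : 1 ≤ j) :
    ∃ c : ℤ, (2 * (j : ℤ) - 1) * t = rT l t j + 2 * l * c ∧
      -(l : ℤ) ≤ rT l t j ∧ rT l t j < l ∧
      ((0 ≤ rT l t j ∧ sigmaT l t j = 1) ∨ (rT l t j < 0 ∧ sigmaT l t j = -1)) := by
  have hx : (((2 * j - 1) * t : ℕ) : ℤ) = (2 * (j : ℤ) - 1) * t := by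
    push_cast [Nat.cast_sub (show 1 ≤ 2 * j by omega)]
    ring
  unfold rT sigmaT
  rw [← hx]
  generalize (2 * j - 1) * t = x
  have hdm := Nat.div_add_mod x (2 * l)
  have hlt := Nat.mod_lt x (show 0 < 2 * l by omega)
  generalize x % (2 * l) = s at *
  generalize x / (2 * l) = q at *
  subst hdm
  have hdiv : (2 * l * q + s) / l = 2 * q + s / l := by
    rw [show 2 * l * q + s = s + l * (2 * q) by ring, Nat.add_mul_div_left _ _ hl]
    ring
  rw [hdiv]
  split_ifs with h
  · have h' : s < l := by exact_mod_cast h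
    refine ⟨q, by push_cast; ring, by omega, h, Or.inl ⟨by omega, ?_⟩⟩
    rw [Nat.div_eq_of_lt h']
    simp [pow_mul]
  · have h' : l ≤ s := by
      push Not at h
      exact_mod_cast h
    have h1 : s / l = 1 := Nat.div_eq_of_lt_le (by omega) (by omega)
    refine ⟨q + 1, by push_cast; ring, by omega, by omega, Or.inr ⟨by omega, ?_⟩⟩
    rw [h1]
    simp [pow_add, pow_mul]

lemma odd_rT {l t j : ℕ} (hl : 0 < l) (ht : Odd t) (hj : 1 ≤ j) : Odd (rT l t j) := by
  obtain ⟨c, hc, -⟩ := rT_sigmaT_spec (t := t) hl hj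
  obtain ⟨u, rfl⟩ := ht
  refine ⟨(2 * j - 1) * u + j - 1 - l * c, ?_⟩
  push_cast at hc
  linarith

lemma neg_lt_rT {l t j : ℕ} (hlt : Nat.Coprime l t) (hj : 1 ≤ j) (hjl : 2 * j ≤ l) :
    -(l : ℤ) < rT l t j := by
  obtain ⟨c, hc, hlow, -, -⟩ := rT_sigmaT_spec (l := l) (t := t) (by omega) hj
  refine lt_of_le_of_ne hlow fun h => ?_
  have hdvd : (l : ℤ) ∣ (2 * (j : ℤ) - 1) * t := ⟨2 * c - 1, by rw [hc, ← h]; ring⟩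
  have hdvd' := IsCoprime.dvd_of_dvd_mul_right (Nat.isCoprime_iff_coprime.2 hlt) hdvd
  have := Int.le_of_dvd (by omega) hdvd'
  omega

lemma rpT_injOn {l t : ℕ} (hl : Odd l) (ht : Odd t) (hlt : Nat.Coprime l t) :
    Set.InjOn (rpT l t) (Icc 1 ((l - 1) / 2)) := by
  intro i hi j hj hij
  simp only [coe_Icc, Set.mem_Icc] at hi hj
  have hpos := hl.pos
  obtain ⟨c, hc, -⟩ := rT_sigmaT_spec (t := t) hpos hi.1
  obtain ⟨d, hd, -⟩ := rT_sigmaT_spec (t := t) hpos hj.1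
  obtain ⟨u, hu⟩ := odd_rT hpos ht hi.1
  obtain ⟨v, hv⟩ := odd_rT hpos ht hj.1
  have hcop : IsCoprime (l : ℤ) (2 * t) := by
    refine IsCoprime.mul_right ?_ (Nat.isCoprime_iff_coprime.2 hlt)
    exact_mod_cast Nat.isCoprime_iff_coprime.2 hl.coprime_two_right
  have habs : rT l t i = rT l t j ∨ rT l t i = -rT l t j := by
    unfold rpT at hij
    omega
  rcases habs with h | h
  · have hdvd : (l : ℤ) ∣ ((i : ℤ) - j) * (2 * t) := ⟨2 * (c - d), by linarith⟩
    have hzero := Int.eq_zero_of_abs_lt_dvd (hcop.dvd_of_dvd_mul_right hdvd)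
      (abs_lt.2 ⟨by omega, by omega⟩)
    omega
  · have hdvd : (l : ℤ) ∣ ((i : ℤ) + j - 1) * (2 * t) := ⟨2 * (c + d), by linarith⟩
    have := Int.le_of_dvd (by omega) (hcop.dvd_of_dvd_mul_right hdvd)
    omega

lemma rpT_mapsTo {l t : ℕ} (hl : Odd l) (ht : Odd t) (hlt : Nat.Coprime l t) :
    Set.MapsTo (rpT l t) (Icc 1 ((l - 1) / 2)) (Icc 1 ((l - 1) / 2)) := by
  intro j hj
  simp only [coe_Icc, Set.mem_Icc] at hj ⊢
  have hpos := hl.pos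
  obtain ⟨w, hw⟩ := hl
  obtain ⟨-, -, -, hup, -⟩ := rT_sigmaT_spec (t := t) hpos hj.1
  obtain ⟨u, hu⟩ := odd_rT hpos ht hj.1
  have hlow := neg_lt_rT hlt hj.1 (by omega)
  unfold rpT
  omega

/-- The defining property of `i_k`. -/
lemma iT_spec {l t k : ℕ} (hl : Odd l) (ht : Odd t) (hlt : Nat.Coprime l t)
    (hk : k ∈ Icc 1 ((l - 1) / 2)) :
    iT l t k ∈ Icc 1 ((l - 1) / 2) ∧ rpT l t (iT l t k) = k := by
  have h : ∃ j, j ∈ Icc 1 ((l - 1) / 2) ∧ rpT l t j = k := by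
    obtain ⟨j, hj, hjk⟩ := surjOn_of_injOn_of_card_le (rpT l t) (rpT_mapsTo hl ht hlt)
      (rpT_injOn hl ht hlt) le_rfl (mem_coe.2 hk)
    exact ⟨j, mem_coe.1 hj, hjk⟩
  unfold iT
  rw [dif_pos h]
  exact h.choose_spec

lemma eq_zero_of_abs_mul_lt {l d : ℤ} (h : |l * d| < l) : d = 0 := by
  have hl : 0 < l := (abs_nonneg _).trans_lt h
  simpa [hl.ne'] using Int.eq_zero_of_abs_lt_dvd (dvd_mul_right l d) h

/-- Two indices with residues of the same sign cannot have `|r(i)| + |r(j)| = l - 1`. -/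
lemma rT_add_rT_ne {m p l t i j : ℕ} (hp : 0 < p)
    (hl : l = 4 * m * p + 1) (ht : (t : ℤ) = l - 2 * p)
    (hi : 1 ≤ i) (hil : 2 * i < l) (hj : 1 ≤ j) (hjl : 2 * j < l) :
    ¬(0 < rT l t i ∧ rT l t i + rT l t j = l - 1) ∧
      ¬(rT l t i < 0 ∧ rT l t i + rT l t j = -(l - 1)) := by
  obtain ⟨c, hc, hlow, hup, -⟩ := rT_sigmaT_spec (l := l) (t := t) (by omega) hi
  obtain ⟨d, hd, -⟩ := rT_sigmaT_spec (l := l) (t := t) (by omega) hj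
  generalize rT l t i = r at *
  generalize rT l t j = s at *
  have hl' : (l : ℤ) = 4 * m * p + 1 := by exact_mod_cast hl
  have hp' : (1 : ℤ) ≤ p := by exact_mod_cast hp
  have hm : (0 : ℤ) ≤ m := by positivity
  have hml : 4 * (m : ℤ) < l := by nlinarith
  have hcop : IsCoprime (l : ℤ) (4 * p) := ⟨1, -m, by rw [hl']; ring⟩
  rw [ht] at hc hd
  constructor
  · rintro ⟨hr, hrs⟩
    have hdvd : (l : ℤ) ∣ ((i : ℤ) + j - 1 + m) * (4 * p) :=
      ⟨2 * (i + j - 1) - 2 * (c + d), by linear_combination -hc - hd - hrs - hl'⟩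
    obtain ⟨e, he⟩ := hcop.dvd_of_dvd_mul_right hdvd
    have he1 : e = 1 := by
      have : 0 < e := by by_contra! h; nlinarith
      have : e < 2 := by by_contra! h; nlinarith
      omega
    rw [he1, mul_one] at he
    have him : (l : ℤ) + 1 ≤ 2 * i + 2 * m := by omega
    obtain ⟨u, hu⟩ : ∃ u : ℤ, 2 * (i : ℤ) - 1 = l - 2 * u :=
      ⟨2 * m * p + 1 - i, by rw [hl']; ring⟩
    have hprod : (l : ℤ) * (l - 2 * p - 2 * u - 2 * c) = r - 4 * p * u := by
      linear_combination hc - (l - 2 * p) * hu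
    have := eq_zero_of_abs_mul_lt (l := (l : ℤ)) (d := l - 2 * p - 2 * u - 2 * c)
      (by rw [hprod, abs_lt]; constructor <;> nlinarith)
    omega
  · rintro ⟨hr, hrs⟩
    have hdvd : (l : ℤ) ∣ ((i : ℤ) + j - 1 - m) * (4 * p) :=
      ⟨2 * (i + j - 1) - 2 * (c + d), by linear_combination -hc - hd - hrs + hl'⟩
    have he := Int.eq_zero_of_abs_lt_dvd (hcop.dvd_of_dvd_mul_right hdvd)
      (abs_lt.2 ⟨by omega, by omega⟩)
    have him : (i : ℤ) ≤ m := by omega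
    have hprod : (l : ℤ) * (2 * i - 1 - 2 * c) = r + 2 * p * (2 * i - 1) := by
      linear_combination hc
    have := eq_zero_of_abs_mul_lt (l := (l : ℤ)) (d := 2 * i - 1 - 2 * c)
      (by rw [hprod, abs_lt]; constructor <;> nlinarith)
    omega

/-- Lemma 2.5(i): for `l = 4mp+1`, `t = 4mp-2p+1`, `p' = 2mp`, one has
`σ_(i_k) + σ_(i_(p'+1-k)) = 0` for `1 ≤ k ≤ p'`. -/
theorem sigma_iT_sum_neg_pos
    (m p k : ℕ) (hm : 0 < m) (hp : 0 < p)
    (hk1 : 1 ≤ k) (hk2 : k ≤ 2 * m * p) :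
    sigmaT (4 * m * p + 1) (4 * m * p - 2 * p + 1) (iT (4 * m * p + 1) (4 * m * p - 2 * p + 1) k)
      + sigmaT (4 * m * p + 1) (4 * m * p - 2 * p + 1) (iT (4 * m * p + 1) (4 * m * p - 2 * p + 1) (2 * m * p + 1 - k)) = 0 := by
  obtain ⟨m, rfl⟩ : ∃ n, m = n + 1 := ⟨m - 1, by omega⟩
  set l := 4 * (m + 1) * p + 1 with hl
  set t := 4 * (m + 1) * p - 2 * p + 1 with ht
  have hlp : l = 2 * (2 * (m + 1) * p) + 1 := by rw [hl]; ring
  have ht' : t = 2 * ((2 * m + 1) * p) + 1 := by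
    rw [ht, show 4 * (m + 1) * p = 2 * ((2 * m + 1) * p) + 2 * p by ring]
    omega
  have htl : (t : ℤ) = l - 2 * p := by
    rw [ht', hl]
    push_cast
    ring
  have hlodd : Odd l := ⟨_, hlp⟩
  have htodd : Odd t := ⟨_, ht'⟩
  have hcop : Nat.Coprime l t := by
    rw [← Nat.isCoprime_iff_coprime, htl, hl]
    push_cast
    exact ⟨1 - 2 * (m + 1), 2 * (m + 1), by ring⟩
  obtain ⟨hi, hik⟩ := iT_spec (k := k) hlodd htodd hcop (mem_Icc.2 ⟨hk1, by omega⟩)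
  obtain ⟨hj, hjk⟩ := iT_spec (k := 2 * (m + 1) * p + 1 - k) hlodd htodd hcop
    (mem_Icc.2 ⟨by omega, by omega⟩)
  rw [mem_Icc] at hi hj
  obtain ⟨u, hu⟩ := odd_rT hlodd.pos htodd hi.1
  obtain ⟨v, hv⟩ := odd_rT hlodd.pos htodd hj.1
  obtain ⟨-, -, -, -, hsi⟩ := rT_sigmaT_spec (t := t) hlodd.pos hi.1
  obtain ⟨-, -, -, -, hsj⟩ := rT_sigmaT_spec (t := t) hlodd.pos hj.1
  obtain ⟨hpos, hneg⟩ := rT_add_rT_ne (i := iT l t k) (j := iT l t (2 * (m + 1) * p + 1 - k))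
    hp hl htl hi.1 (by omega) hj.1 (by omega)
  unfold rpT at hik hjk
  rcases hsi with ⟨hri, hsi⟩ | ⟨hri, hsi⟩ <;> rcases hsj with ⟨hrj, hsj⟩ | ⟨hrj, hsj⟩ <;>
    rw [hsi, hsj]
  · exact absurd ⟨by omega, by omega⟩ hpos
  · norm_num
  · norm_num
  · exact absurd ⟨by omega, by omega⟩ hneg

end
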